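/- Let G be a median graph and let S be the vertex set of a connected subgraph of G. Then S is convex if and only if S is locally convex, i.e., I(x,y) ⊆ S for any two vertices x, y ∈ S having a common neighbor in S. -/

import Mathlib

/-- The interval `I(u,v)` in a graph. -/
def gInterval {V : Type} (G : SimpleGraph V) (u v : V) : Set V :=
  {w | G.dist u w + G.dist w v = G.dist u v}

/-- A median graph: a connected graph in which every triple of vertices has a
unique median. -/
def IsMedianGraph {V : Type} (G : SimpleGraph V) : Prop :=
  G.Connected ∧ ∀ x y z : V, ∃! m : V,
    m ∈ gInterval G x y ∧ m ∈ gInterval G y z ∧ m ∈ gInterval G z x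

/-- A set of vertices is convex if it contains the interval between any two of its
elements. -/
def ConvexSet {V : Type} (G : SimpleGraph V) (S : Set V) : Prop :=
  ∀ u ∈ S, ∀ v ∈ S, gInterval G u v ⊆ S

/-!
The natural setting is that of weakly modular graphs, which include the median graphs. Fix a base
point `x ∈ S` and walk inside `S`; the claim is that `I(x,y) ⊆ S` is preserved along each edge
`y' y` of the walk. If `y` is closer to `x` than `y'`, its interval is smaller. If both are equally
far, the triangle condition replaces `y'` by a common neighbour of `y` and `y'` one step closer to
`x`. If `y` is farther, let `v ≠ y'` be another neighbour of `y` on the way to `x`; weak modularity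
gives a common neighbour `u` of `v` and `y'` one step closer to `x`. Then `u ∈ I(x,y') ⊆ S`, local
convexity applied to `u`, `y'`, `y` puts `v` in `S`, and induction on the distance to `x`, applied
to the edge `u v`, gives `I(x,v) ⊆ S`.
-/

section Distance

variable {V : Type} {G : SimpleGraph V} {u v w : V}

theorem dist_eq_two_of_adj_of_adj (hvw : v ≠ w) (hnadj : ¬G.Adj v w) (hvu : G.Adj v u)
    (huw : G.Adj u w) : G.dist v w = 2 := by
  have hle : G.dist v w ≤ 2 := SimpleGraph.dist_le (.cons hvu (.cons huw .nil))
  have hlt : 1 < G.dist v w :=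
    (hvu.reachable.trans huw.reachable).one_lt_dist_of_ne_of_not_adj hvw hnadj
  omega

theorem mem_gInterval : w ∈ gInterval G u v ↔ G.dist u w + G.dist w v = G.dist u v :=
  Iff.rfl

theorem right_mem_gInterval : v ∈ gInterval G u v := by
  simp [mem_gInterval]

theorem gInterval_self (hc : G.Connected) : gInterval G u u = {u} := by
  ext w
  simp [mem_gInterval, hc.dist_eq_zero_iff, eq_comm]

theorem gInterval_subset_gInterval (hc : G.Connected) (hv : v ∈ gInterval G u w) :
    gInterval G u v ⊆ gInterval G u w := by
  intro a ha
  rw [mem_gInterval] at *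
  have haw : G.dist a w ≤ G.dist a v + G.dist v w := hc.dist_triangle
  have huw : G.dist u w ≤ G.dist u a + G.dist a w := hc.dist_triangle
  omega

theorem mem_gInterval_of_adj (hvw : G.Adj v w) (hd : G.dist u v + 1 = G.dist u w) :
    v ∈ gInterval G u w := by
  rwa [mem_gInterval, SimpleGraph.dist_eq_one_iff_adj.2 hvw]

theorem exists_adj_dist_add_one_eq (hc : G.Connected) (huv : u ≠ v) :
    ∃ w, G.Adj w v ∧ G.dist u w + 1 = G.dist u v := by
  obtain ⟨p, hp⟩ := hc.exists_walk_length_eq_dist v u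
  cases p with
  | nil => exact absurd rfl huv
  | @cons _ w _ hvw q =>
    refine ⟨w, hvw.symm, ?_⟩
    have hwu : G.dist w u ≤ q.length := SimpleGraph.dist_le q
    have hvu : G.dist v u ≤ G.dist v w + G.dist w u := hc.dist_triangle
    rw [SimpleGraph.dist_eq_one_iff_adj.2 hvw] at hvu
    rw [SimpleGraph.Walk.length_cons] at hp
    rw [G.dist_comm (u := u) (v := w), G.dist_comm (u := u) (v := v)]
    omega

theorem exists_adj_mem_gInterval (hc : G.Connected) (hw : w ∈ gInterval G u v) (hwv : w ≠ v) :
    ∃ a, G.Adj a v ∧ G.dist u a + 1 = G.dist u v ∧ w ∈ gInterval G u a := by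
  obtain ⟨a, hav, hwa⟩ := exists_adj_dist_add_one_eq hc hwv
  have hua : G.dist u a ≤ G.dist u w + G.dist w a := hc.dist_triangle
  have huv : G.dist u v ≤ G.dist u a + G.dist a v := hc.dist_triangle
  rw [SimpleGraph.dist_eq_one_iff_adj.2 hav] at huv
  rw [mem_gInterval] at hw
  exact ⟨a, hav, by omega, by rw [mem_gInterval]; omega⟩

end Distance

/-- A weakly modular graph: a connected graph satisfying the triangle and quadrangle conditions,
the class for which local convexity is shown to imply convexity. The usual distance `k - 1` is
written additively, so that no truncated subtraction occurs. -/
structure IsWeaklyModularGraph {V : Type} (G : SimpleGraph V) : Prop where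
  connected : G.Connected
  triangle_condition : ∀ ⦃u v w : V⦄, G.Adj v w → G.dist u v = G.dist u w →
    ∃ x, G.Adj x v ∧ G.Adj x w ∧ G.dist u x + 1 = G.dist u v
  quadrangle_condition : ∀ ⦃u v w z : V⦄, G.Adj v z → G.Adj w z → G.dist v w = 2 →
    G.dist u v + 1 = G.dist u z → G.dist u w + 1 = G.dist u z →
    ∃ x, G.Adj x v ∧ G.Adj x w ∧ G.dist u x + 1 = G.dist u v

/-- A modular graph: a connected graph in which every triple of vertices has at least one
median. This class lies between the median and the weakly modular graphs. -/
def IsModularGraph {V : Type} (G : SimpleGraph V) : Prop :=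
  G.Connected ∧ ∀ x y z : V,
    (gInterval G x y ∩ gInterval G y z ∩ gInterval G z x).Nonempty

section Modular

variable {V : Type} {G : SimpleGraph V} {u v w z : V}

theorem IsMedianGraph.isModularGraph (hG : IsMedianGraph G) : IsModularGraph G := by
  refine ⟨hG.1, fun x y z => ?_⟩
  obtain ⟨m, ⟨hxy, hyz, hzx⟩, -⟩ := hG.2 x y z
  exact ⟨m, ⟨hxy, hyz⟩, hzx⟩

namespace IsModularGraph

theorem exists_dist_add_dist_eq (hG : IsModularGraph G) (x y z : V) :
    ∃ m, G.dist x m + G.dist m y = G.dist x y ∧ G.dist x m + G.dist m z = G.dist x z ∧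
      G.dist m y + G.dist m z = G.dist y z := by
  obtain ⟨m, ⟨hxy, hyz⟩, hzx⟩ := hG.2 x y z
  rw [mem_gInterval] at hxy hyz hzx
  rw [G.dist_comm (u := y) (v := m)] at hyz
  rw [G.dist_comm (u := z) (v := m), G.dist_comm (u := m) (v := x),
    G.dist_comm (u := z) (v := x), add_comm] at hzx
  exact ⟨m, hxy, hzx, hyz⟩

theorem dist_ne_of_adj (hG : IsModularGraph G) (hvw : G.Adj v w) : G.dist u v ≠ G.dist u w := by
  obtain ⟨m, huv, huw, hm⟩ := hG.exists_dist_add_dist_eq u v w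
  rw [SimpleGraph.dist_eq_one_iff_adj.2 hvw] at hm
  omega

theorem exists_adj_adj_of_dist_eq_two (hG : IsModularGraph G) (hvw : G.dist v w = 2)
    (hd : G.dist u v = G.dist u w) :
    ∃ x, G.Adj x v ∧ G.Adj x w ∧ G.dist u x + 1 = G.dist u v := by
  obtain ⟨m, huv, huw, hm⟩ := hG.exists_dist_add_dist_eq u v w
  have hmv : G.dist m v = 1 := by omega
  have hmw : G.dist m w = 1 := by omega
  exact ⟨m, SimpleGraph.dist_eq_one_iff_adj.1 hmv, SimpleGraph.dist_eq_one_iff_adj.1 hmw,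
    by rwa [hmv] at huv⟩

theorem isWeaklyModularGraph (hG : IsModularGraph G) : IsWeaklyModularGraph G where
  connected := hG.1
  triangle_condition _ _ _ hvw hd := absurd hd (hG.dist_ne_of_adj hvw)
  quadrangle_condition _ _ _ _ _ _ hvw hv hw :=
    hG.exists_adj_adj_of_dist_eq_two hvw (Nat.add_right_cancel (hv.trans hw.symm))

end IsModularGraph

theorem IsWeaklyModularGraph.exists_adj_adj_of_adj_of_adj (hG : IsWeaklyModularGraph G)
    (hvw : v ≠ w) (hvz : G.Adj v z) (hwz : G.Adj w z) (hv : G.dist u v + 1 = G.dist u z)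
    (hw : G.dist u w + 1 = G.dist u z) :
    ∃ x, G.Adj x v ∧ G.Adj x w ∧ G.dist u x + 1 = G.dist u v := by
  by_cases hadj : G.Adj v w
  · exact hG.triangle_condition hadj (Nat.add_right_cancel (hv.trans hw.symm))
  · exact hG.quadrangle_condition hvz hwz
      (dist_eq_two_of_adj_of_adj hvw hadj hvz hwz.symm) hv hw

end Modular

/-- Local convexity of a set of vertices: it contains the interval between any two of its elements
that have a common neighbour in the set. -/
def LocallyConvexSet {V : Type} (G : SimpleGraph V) (S : Set V) : Prop :=
  ∀ x ∈ S, ∀ y ∈ S, (∃ z ∈ S, G.Adj x z ∧ G.Adj z y) → gInterval G x y ⊆ S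

section LocallyConvex

variable {V : Type} {G : SimpleGraph V} {S : Set V} {x y y' : V}

theorem ConvexSet.locallyConvexSet (hS : ConvexSet G S) : LocallyConvexSet G S :=
  fun x hx y hy _ => hS x hx y hy

namespace LocallyConvexSet

theorem gInterval_subset_of_dist_add_one_eq (hS : LocallyConvexSet G S)
    (hG : IsWeaklyModularGraph G) (hadj : G.Adj y' y) (hd : G.dist x y' + 1 = G.dist x y)
    (hy : y ∈ S) (hI : gInterval G x y' ⊆ S) : gInterval G x y ⊆ S := by
  induction hn : G.dist x y' using Nat.strong_induction_on generalizing y' y with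
  | _ n ih =>
    intro w hw
    obtain rfl | hwy := eq_or_ne w y
    · exact hy
    obtain ⟨v, hvy, hxv, hwv⟩ := exists_adj_mem_gInterval hG.connected hw hwy
    obtain rfl | hvy' := eq_or_ne v y'
    · exact hI hwv
    obtain ⟨u, huv, huy', hxu⟩ := hG.exists_adj_adj_of_adj_of_adj hvy' hvy hadj hxv hd
    have hu : u ∈ gInterval G x y' := mem_gInterval_of_adj huy' (by omega)
    have hvS : v ∈ S := by
      refine hS u (hI hu) y hy ⟨y', hI right_mem_gInterval, huy', hadj⟩ ?_
      have hxy : G.dist x y ≤ G.dist x u + G.dist u y := hG.connected.dist_triangle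
      have huy : G.dist u y ≤ 2 := SimpleGraph.dist_le (.cons huv (.cons hvy .nil))
      exact mem_gInterval_of_adj hvy (by rw [SimpleGraph.dist_eq_one_iff_adj.2 huv]; omega)
    have hIu : gInterval G x u ⊆ S := (gInterval_subset_gInterval hG.connected hu).trans hI
    exact ih (G.dist x u) (by omega) huv hxu hvS hIu rfl hwv

theorem gInterval_subset_of_adj (hS : LocallyConvexSet G S) (hG : IsWeaklyModularGraph G)
    (hadj : G.Adj y' y) (hy : y ∈ S) (hI : gInterval G x y' ⊆ S) : gInterval G x y ⊆ S := by
  obtain heq | hlt | hgt : G.dist x y' = G.dist x y ∨ G.dist x y' + 1 = G.dist x y ∨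
      G.dist x y + 1 = G.dist x y' := by
    have := hadj.diff_dist_adj (u := x)
    omega
  · obtain ⟨u, huy', huy, hxu⟩ := hG.triangle_condition hadj heq
    have hIu : gInterval G x u ⊆ S :=
      (gInterval_subset_gInterval hG.connected (mem_gInterval_of_adj huy' hxu)).trans hI
    exact hS.gInterval_subset_of_dist_add_one_eq hG huy (hxu.trans heq) hy hIu
  · exact hS.gInterval_subset_of_dist_add_one_eq hG hadj hlt hy hI
  · exact (gInterval_subset_gInterval hG.connected (mem_gInterval_of_adj hadj.symm hgt)).trans hI

theorem gInterval_subset_of_walk (hS : LocallyConvexSet G S) (hG : IsWeaklyModularGraph G)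
    {x y : S} (p : (G.induce S).Walk y x) : gInterval G (x : V) y ⊆ S := by
  induction p with
  | @nil x => simp [gInterval_self hG.connected]
  | @cons y _ _ hadj _ ih =>
    exact hS.gInterval_subset_of_adj hG (SimpleGraph.induce_adj.1 hadj).symm y.2 ih

theorem convexSet (hS : LocallyConvexSet G S) (hG : IsWeaklyModularGraph G)
    (hconn : (G.induce S).Preconnected) : ConvexSet G S := by
  intro u hu v hv
  obtain ⟨p⟩ := hconn ⟨v, hv⟩ ⟨u, hu⟩
  exact hS.gInterval_subset_of_walk hG p

end LocallyConvexSet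

end LocallyConvex

theorem convex_iff_locally_convex_general {V : Type} {G : SimpleGraph V}
    (hG : IsWeaklyModularGraph G) {S : Set V} (hconn : (G.induce S).Preconnected) :
    ConvexSet G S ↔ LocallyConvexSet G S :=
  ⟨fun hS => hS.locallyConvexSet, fun hS => hS.convexSet hG hconn⟩

/-- Local characterization of convexity in median graphs: a connected subgraph `S`
of a median graph is convex iff it is locally convex, i.e., `I(x,y) ⊆ S` for any
two vertices `x, y ∈ S` having a common neighbor in `S`. -/
theorem convex_iff_locally_convex {V : Type} (G : SimpleGraph V)
    (hG : IsMedianGraph G) (S : Set V) (hconn : (G.induce S).Connected) :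
    ConvexSet G S ↔
      ∀ x ∈ S, ∀ y ∈ S, (∃ z ∈ S, G.Adj x z ∧ G.Adj z y) → gInterval G x y ⊆ S :=
  convex_iff_locally_convex_general hG.isModularGraph.isWeaklyModularGraph hconn.preconnected
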